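/- For a real sequence (s_k)_{k≥0} and a fixed k ∈ ℕ, there exists a (nonnegative Borel) measure σ on ℝ whose support consists of exactly k+1 points such that s_n = ∫_ℝ u^n dσ(u) for all n ≥ 0, if and only if D_0 > 0, D_1 > 0, …, D_k > 0 and D_{k+1} = D_{k+2} = ⋯ = 0, where D_m denotes the determinant of the (m+1)×(m+1) Hankel matrix (s_{i+j})_{0≤i,j≤m}. -/

import Mathlib

open MeasureTheory

/-- The determinant `D_m` of the `(m+1) × (m+1)` Hankel matrix `(s (i+j))_{0 ≤ i,j ≤ m}`. -/
noncomputable def hankelDet (s : ℕ → ℝ) (m : ℕ) : ℝ :=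
  (Matrix.of fun i j : Fin (m + 1) => s (i.1 + j.1)).det

/-!
The `n × n` Hankel matrix of `s` is the Gram matrix of `(p, q) ↦ L (p q)` on the polynomials of
degree less than `n`, where `L` is the linear functional with `L (X ^ i) = s i`. By Sylvester's
criterion, positivity of `D_0, …, D_k` says that this form is positive definite in degrees at most
`k`, and the vanishing of the later determinants then says that its radical contains a polynomial
`p` of degree `k + 1`. If `p = ((X - a) ^ 2 + b ^ 2) h`, then `0 = L (p h) = L (((X - a) h) ^ 2) +
b ^ 2 L (h ^ 2)` contradicts positivity, so `p` has `k + 1` distinct real roots. Reducing modulo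
`p` and interpolating at its roots writes `L` as a combination of point evaluations, and testing
`L` on the squares of the Lagrange basis polynomials shows that the weights are positive.
-/

open Polynomial
open scoped Matrix

section Sylvester

open scoped ComplexOrder

variable {𝕜 : Type*} [RCLike 𝕜]

lemma posDef_fromBlocks_of_det_pos {m n : Type*} [Fintype m] [DecidableEq m] [Fintype n]
    [DecidableEq n] [Unique n] {A : Matrix m m 𝕜} (hA : A.PosDef) (B : Matrix m n 𝕜)
    (D : Matrix n n 𝕜) (hdet : 0 < (Matrix.fromBlocks A B Bᴴ D).det) :
    (Matrix.fromBlocks A B Bᴴ D).PosDef := by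
  have := hA.isUnit.invertible
  have hschur : 0 < (D - Bᴴ * A⁻¹ * B) default default := by
    rw [Matrix.det_fromBlocks₁₁, Matrix.invOf_eq_nonsing_inv] at hdet
    simpa only [Matrix.det_unique] using (pos_iff_pos_of_mul_pos hdet).1 hA.det_pos
  have hdiag : D - Bᴴ * A⁻¹ * B = Matrix.diagonal fun i => (D - Bᴴ * A⁻¹ * B) i i := by
    ext i j
    rw [Subsingleton.elim i j, Matrix.diagonal_apply_eq]
  have hpsd : (Matrix.fromBlocks A B Bᴴ D).PosSemidef := by
    rw [hA.fromBlocks₁₁, hdiag, Matrix.posSemidef_diagonal_iff]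
    intro i
    rw [Unique.eq_default i]
    exact hschur.le
  exact hpsd.posDef_iff_det_ne_zero.2 hdet.ne'

theorem posDef_iff_forall_det_submatrix_castLE_pos {n : ℕ} {M : Matrix (Fin n) (Fin n) 𝕜}
    (hM : M.IsHermitian) :
    M.PosDef ↔ ∀ m (h : m ≤ n), 0 < (M.submatrix (Fin.castLE h) (Fin.castLE h)).det := by
  refine ⟨fun hpos m h => (hpos.submatrix (Fin.castLE_injective h)).det_pos, fun h => ?_⟩
  induction n with
  | zero => exact Matrix.PosDef.of_dotProduct_mulVec_pos hM fun x hx =>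
      (hx (Subsingleton.elim x 0)).elim
  | succ n ih =>
    let e : Fin n ⊕ Fin 1 ≃ Fin (n + 1) := finSumFinEquiv
    let N := M.submatrix e e
    have hN : N.IsHermitian := hM.submatrix e
    have hblocks : N = .fromBlocks N.toBlocks₁₁ N.toBlocks₁₂ N.toBlocks₁₂ᴴ N.toBlocks₂₂ := by
      conv_lhs => rw [← N.fromBlocks_toBlocks]
      congr 1
      ext i j
      exact (hN.apply _ _).symm
    have hA : N.toBlocks₁₁.PosDef :=
      ih (hM.submatrix _) fun m hm => h m (hm.trans n.le_succ)
    have hNdet : 0 < N.det := by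
      rw [Matrix.det_submatrix_equiv_self]
      exact h (n + 1) le_rfl
    have hNpos : N.PosDef := by
      rw [hblocks] at hNdet ⊢
      exact posDef_fromBlocks_of_det_pos hA _ _ hNdet
    simpa [N] using hNpos.submatrix e.symm.injective

end Sylvester

section MomentForm

variable {R : Type*} [CommRing R]

/-- The symmetric bilinear form `(p, q) ↦ L (p q)` attached to a linear functional `L` on
polynomials. -/
noncomputable def momentForm (L : R[X] →ₗ[R] R) : LinearMap.BilinForm R R[X] :=
  (LinearMap.mul R R[X]).compr₂ L

lemma momentForm_apply (L : R[X] →ₗ[R] R) (p q : R[X]) : momentForm L p q = L (p * q) :=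
  rfl

lemma isSymm_momentForm (L : R[X] →ₗ[R] R) : (momentForm L).IsSymm :=
  ⟨fun p q => by simp only [momentForm_apply, mul_comm]⟩

/-- The radical of `momentForm L`, which is the largest ideal on which `L` vanishes. -/
noncomputable def momentIdeal (L : R[X] →ₗ[R] R) : Ideal R[X] where
  __ := LinearMap.ker (momentForm L)
  smul_mem' r p hp := LinearMap.ext fun q => by
    rw [momentForm_apply, smul_eq_mul, mul_comm r, mul_assoc]
    exact LinearMap.congr_fun hp (r * q)

lemma mem_momentIdeal {L : R[X] →ₗ[R] R} {p : R[X]} :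
    p ∈ momentIdeal L ↔ ∀ q, L (p * q) = 0 :=
  LinearMap.ext_iff

/-- Positive definiteness of `momentForm L` on the polynomials of degree less than `n`. -/
def IsPosDefBelow [LT R] (L : R[X] →ₗ[R] R) (n : ℕ) : Prop :=
  ∀ p : R[X], p ≠ 0 → p.degree < n → 0 < L (p * p)

/-- The linear functional on polynomials with moments `L (X ^ n) = s n`. -/
noncomputable def momentFunctional (s : ℕ → R) : R[X] →ₗ[R] R :=
  (basisMonomials R).constr R s

lemma momentFunctional_X_pow (s : ℕ → R) (n : ℕ) : momentFunctional s (X ^ n) = s n := by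
  rw [X_pow_eq_monomial]
  exact (basisMonomials R).constr_basis R s n

lemma momentFunctional_eq_iff {s : ℕ → R} {L : R[X] →ₗ[R] R} :
    momentFunctional s = L ↔ ∀ n, s n = L (X ^ n) := by
  refine ⟨fun h n => by rw [← h, momentFunctional_X_pow], fun h => ?_⟩
  refine (basisMonomials R).ext fun n => ?_
  simp only [coe_basisMonomials, ← X_pow_eq_monomial, momentFunctional_X_pow, h]

end MomentForm

section Hankel

/-- The `n × n` Hankel matrix `(s (i + j))_{0 ≤ i, j < n}`; thus `hankelDet s m` is the determinant
of `hankelMatrix s (m + 1)`. -/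
def hankelMatrix {α : Type*} (s : ℕ → α) (n : ℕ) : Matrix (Fin n) (Fin n) α :=
  .of fun i j => s (i + j)

variable {R : Type*} [CommRing R]

lemma toMatrix_momentForm_restrict_degreeLT (s : ℕ → R) (n : ℕ) :
    LinearMap.BilinForm.toMatrix (degreeLT.basis R n)
      ((momentForm (momentFunctional s)).restrict (degreeLT R n)) = hankelMatrix s n := by
  ext i j
  simp [LinearMap.BilinForm.toMatrix_apply, hankelMatrix, momentForm_apply, ← pow_add,
    momentFunctional_X_pow]

lemma isPosDefBelow_momentFunctional_iff [PartialOrder R] [StarRing R] [TrivialStar R]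
    {s : ℕ → R} {n : ℕ} :
    IsPosDefBelow (momentFunctional s) n ↔ (hankelMatrix s n).PosDef := by
  rw [← toMatrix_momentForm_restrict_degreeLT,
    ← LinearMap.BilinForm.posDef_toQuadraticMap_iff_matrix _ _ ((isSymm_momentForm _).restrict _)]
  simp [IsPosDefBelow, QuadraticMap.PosDef, mem_degreeLT, momentForm_apply, imp.swap]

lemma det_hankelMatrix_eq_zero_iff [IsDomain R] {s : ℕ → R} {n : ℕ} :
    (hankelMatrix s n).det = 0 ↔ ∃ p : R[X], p ≠ 0 ∧ p.degree < n ∧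
      ∀ q : R[X], q.degree < n → momentFunctional s (p * q) = 0 := by
  rw [← toMatrix_momentForm_restrict_degreeLT, LinearMap.BilinForm.toMatrix, ← not_ne_iff,
    ← LinearMap.separatingLeft_iff_det_ne_zero (degreeLT.basis R n)]
  simp only [LinearMap.SeparatingLeft, Subtype.forall, mem_degreeLT, momentForm_apply,
    LinearMap.BilinForm.restrict_apply, LinearMap.domRestrict_apply, Submodule.mk_eq_zero]
  push Not
  exact exists_congr fun p => by tauto

lemma isPosDefBelow_momentFunctional_iff_forall_det_pos {s : ℕ → ℝ} {n : ℕ} :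
    IsPosDefBelow (momentFunctional s) n ↔ ∀ m ≤ n, 0 < (hankelMatrix s m).det := by
  have hherm : (hankelMatrix s n).IsHermitian := by
    ext i j
    simp [hankelMatrix, add_comm]
  rw [isPosDefBelow_momentFunctional_iff, posDef_iff_forall_det_submatrix_castLE_pos hherm]
  rfl

lemma exists_le_natDegree_forall_momentFunctional_mul_eq_zero [IsDomain R] {s : ℕ → R} {n m : ℕ}
    (hnm : n ≤ m) (hn : (hankelMatrix s n).det ≠ 0) (hm : (hankelMatrix s (m + 1)).det = 0) :
    ∃ q : R[X], q ≠ 0 ∧ n ≤ q.natDegree ∧ q.natDegree ≤ m ∧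
      ∀ r : R[X], r.natDegree ≤ m → momentFunctional s (q * r) = 0 := by
  obtain ⟨q, hq0, hqdeg, hq⟩ := det_hankelMatrix_eq_zero_iff.1 hm
  refine ⟨q, hq0, ?_, ?_, fun r hr => hq r ?_⟩
  · by_contra! hlt
    refine hn (det_hankelMatrix_eq_zero_iff.2 ⟨q, hq0, ?_, fun r hr => hq r (hr.trans ?_)⟩)
    · exact (natDegree_lt_iff_degree_lt hq0).1 hlt
    · exact_mod_cast Nat.lt_succ_of_le hnm
  · exact Nat.lt_succ_iff.1 ((natDegree_lt_iff_degree_lt hq0).2 hqdeg)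
  · exact (degree_le_of_natDegree_le hr).trans_lt (by exact_mod_cast m.lt_succ_self)

variable {K : Type*} [Field K]

lemma eq_zero_of_forall_exists_degree_eq {M : Type*} [AddCommGroup M] [Module K M]
    {f : K[X] →ₗ[K] M} (h : ∀ n : ℕ, ∃ q : K[X], q.degree = n ∧ f q = 0) : f = 0 := by
  choose q hdeg hq using h
  let S : Polynomial.Sequence K := ⟨q, hdeg⟩
  refine LinearMap.ext_on_range (S.span fun n => ?_) hq
  exact (leadingCoeff_ne_zero.2 (S.ne_zero n)).isUnit

lemma exists_mem_momentIdeal_of_det_hankelMatrix {s : ℕ → K} {n : ℕ}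
    (hn : (hankelMatrix s n).det ≠ 0) (hgt : ∀ m > n, (hankelMatrix s m).det = 0) :
    ∃ p ∈ momentIdeal (momentFunctional s), p.degree = n := by
  have hker (m : ℕ) (hm : n ≤ m) := exists_le_natDegree_forall_momentFunctional_mul_eq_zero hm hn
    (hgt (m + 1) (Nat.lt_succ_of_le hm))
  obtain ⟨p, hp0, hnp, hpn, hp⟩ := hker n le_rfl
  have hpdeg : p.natDegree = n := le_antisymm hpn hnp
  refine ⟨p, eq_zero_of_forall_exists_degree_eq fun m => ?_,
    (degree_eq_iff_natDegree_eq hp0).2 hpdeg⟩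
  obtain hm | hm := le_total m n
  · exact ⟨X ^ m, degree_X_pow m, hp _ ((natDegree_X_pow_le m).trans hm)⟩
  · obtain ⟨q, hq0, hnq, hqm, hq⟩ := hker m hm
    -- `p * X ^ (m - deg q)` has degree at most `m`, so `q` is orthogonal to it; in other words,
    -- `p` is orthogonal to `X ^ (m - deg q) * q`, which has degree `m`.
    refine ⟨X ^ (m - q.natDegree) * q, ?_, ?_⟩
    · rw [degree_eq_iff_natDegree_eq (mul_ne_zero (pow_ne_zero _ X_ne_zero) hq0),
        natDegree_X_pow_mul _ hq0]
      omega
    · have hdeg : (p * X ^ (m - q.natDegree)).natDegree ≤ m := by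
        rw [natDegree_mul_X_pow _ hp0]
        omega
      rw [momentForm_apply, ← mul_assoc, mul_comm]
      exact hq _ hdeg

lemma exists_mem_momentIdeal_iff_forall_det_hankelMatrix {s : ℕ → K} {n : ℕ}
    (hn : (hankelMatrix s n).det ≠ 0) :
    (∃ p ∈ momentIdeal (momentFunctional s), p.degree = n) ↔
      ∀ m > n, (hankelMatrix s m).det = 0 := by
  refine ⟨?_, exists_mem_momentIdeal_of_det_hankelMatrix hn⟩
  rintro ⟨p, hp, hpdeg⟩ m hm
  refine det_hankelMatrix_eq_zero_iff.2 ⟨p, ?_, ?_, fun q _ => mem_momentIdeal.1 hp q⟩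
  · rintro rfl
    simp at hpdeg
  · rw [hpdeg]
    exact_mod_cast hm

end Hankel

section RealRoots

lemma roots_nodup_of_forall_not_sq_dvd {R : Type*} [CommRing R] [IsDomain R] {p : R[X]}
    (h : ∀ a : R, ¬ (X - C a) ^ 2 ∣ p) : p.roots.Nodup := by
  classical
  refine Multiset.nodup_iff_count_le_one.2 fun a => ?_
  rw [count_roots]
  by_contra! ha
  exact h a ((pow_dvd_pow _ ha).trans (pow_rootMultiplicity_dvd p a))

lemma splits_of_forall_not_sq_add_sq_dvd {p : ℝ[X]}
    (h : ∀ a b : ℝ, ¬ (X - C a) ^ 2 + C (b ^ 2) ∣ p) : p.Splits := by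
  refine .of_splits_map (algebraMap ℝ ℂ) (IsAlgClosed.splits _) fun z hz => ?_
  have hroot : aeval z p = 0 := by
    rw [← eval_map_algebraMap]
    exact isRoot_of_mem_roots hz
  have him : z.im = 0 := by
    by_contra him
    have hquad : (X ^ 2 - C (2 * z.re) * X + C (‖z‖ ^ 2) : ℝ[X]) =
        (X - C z.re) ^ 2 + C (z.im ^ 2) := by
      rw [Complex.sq_norm, Complex.normSq_apply]
      simp only [C_mul, C_add, C_pow, C_ofNat]
      ring
    exact h z.re z.im (hquad ▸ quadratic_dvd_of_aeval_eq_zero_im_ne_zero p hroot him)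
  exact ⟨z.re, Complex.ext rfl him.symm⟩

lemma associated_nodal_of_splits_of_nodup {K : Type*} [Field K] [DecidableEq K] {p : K[X]}
    (hp : p ≠ 0) (hs : p.Splits) (hn : p.roots.Nodup) :
    Associated p (Lagrange.nodal p.roots.toFinset id) := by
  have hnodal : Lagrange.nodal p.roots.toFinset id = (p.roots.map (X - C ·)).prod := by
    rw [Lagrange.nodal_eq, Finset.prod_eq_multiset_prod, Multiset.toFinset_val, hn.dedup]
    rfl
  have hunit : IsUnit (C p.leadingCoeff) := isUnit_C.2 (leadingCoeff_ne_zero.2 hp).isUnit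
  rw [hnodal]
  conv_lhs => rw [hs.eq_prod_roots]
  exact (associated_isUnit_mul_left_iff hunit).2 (.refl _)

-- Taking `b = 0` excludes multiple roots of `p` and, over `ℝ`, `b ≠ 0` excludes nonreal ones.
lemma not_sq_add_sq_dvd_of_mem_momentIdeal {K : Type*} [Field K] [LinearOrder K]
    [IsStrictOrderedRing K] {L : K[X] →ₗ[K] K} {p : K[X]} {n : ℕ} (hL : IsPosDefBelow L n)
    (hp : p ∈ momentIdeal L) (hdeg : p.degree = n) (a b : K) :
    ¬ (X - C a) ^ 2 + C (b ^ 2) ∣ p := by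
  rintro ⟨h, rfl⟩
  have hh : h ≠ 0 := by
    rintro rfl
    simp at hdeg
  have hquad : ((X - C a) ^ 2 + C (b ^ 2)).degree = 2 := by compute_degree!
  rw [degree_mul, hquad, degree_eq_natDegree hh] at hdeg
  have hn : n = 2 + h.natDegree := by exact_mod_cast hdeg.symm
  have hpos : 0 < L ((X - C a) * h * ((X - C a) * h)) := by
    refine hL _ (mul_ne_zero (X_sub_C_ne_zero a) hh) ?_
    rw [degree_mul, degree_X_sub_C, degree_eq_natDegree hh, hn]
    exact_mod_cast (by omega)
  have hposh : 0 < L (h * h) := by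
    refine hL h hh ?_
    rw [degree_eq_natDegree hh, hn]
    exact_mod_cast (by omega)
  have hzero : L ((X - C a) * h * ((X - C a) * h)) + b ^ 2 * L (h * h) = 0 := by
    rw [← mem_momentIdeal.1 hp h, ← smul_eq_mul (b ^ 2), ← map_smul, ← map_add, smul_eq_C_mul]
    congr 1
    ring
  exact (add_pos_of_pos_of_nonneg hpos (mul_nonneg (sq_nonneg b) hposh.le)).ne' hzero

lemma exists_nodal_mem_momentIdeal {L : ℝ[X] →ₗ[ℝ] ℝ} {p : ℝ[X]} {n : ℕ}
    (hL : IsPosDefBelow L n) (hp : p ∈ momentIdeal L) (hdeg : p.degree = n) :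
    ∃ S : Finset ℝ, S.card = n ∧ Lagrange.nodal S id ∈ momentIdeal L := by
  have hndvd := not_sq_add_sq_dvd_of_mem_momentIdeal hL hp hdeg
  have hp0 : p ≠ 0 := by
    rintro rfl
    simp at hdeg
  have hassoc := associated_nodal_of_splits_of_nodup hp0
    (splits_of_forall_not_sq_add_sq_dvd hndvd)
    (roots_nodup_of_forall_not_sq_dvd fun a => by simpa using hndvd a 0)
  refine ⟨p.roots.toFinset, ?_, (momentIdeal L).mem_of_dvd hassoc.dvd hp⟩
  have := degree_eq_degree_of_associated hassoc
  rw [hdeg, Lagrange.degree_nodal] at this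
  exact_mod_cast this.symm

end RealRoots

section Quadrature

lemma nodal_mem_momentIdeal_sum_leval {R : Type*} [CommRing R] (S : Finset R) (w : R → R) :
    Lagrange.nodal S id ∈ momentIdeal (∑ x ∈ S, w x • leval x) := by
  refine mem_momentIdeal.2 fun q => ?_
  rw [LinearMap.sum_apply]
  refine Finset.sum_eq_zero fun x hx => ?_
  have hx0 : (Lagrange.nodal S id).eval x = 0 := Lagrange.eval_nodal_at_node (v := id) hx
  simp [leval_apply, hx0]

lemma eq_sum_leval_of_nodal_mem_momentIdeal {K : Type*} [Field K] [DecidableEq K]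
    {L : K[X] →ₗ[K] K} {S : Finset K} (h : Lagrange.nodal S id ∈ momentIdeal L) :
    L = ∑ x ∈ S, L (Lagrange.basis S id x) • leval x := by
  refine LinearMap.ext fun f => ?_
  let r := f %ₘ Lagrange.nodal S id
  have hmonic : (Lagrange.nodal S id).Monic := Lagrange.nodal_monic
  have hrf : ∀ x ∈ S, r.eval x = f.eval x := fun x hx =>
    eval₂_modByMonic_eq_self_of_root (Lagrange.eval_nodal_at_node (v := id) hx)
  have hr : r = Lagrange.interpolate S id (f.eval ·) :=
    Lagrange.eq_interpolate_of_eval_eq _ Function.injective_id.injOn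
      ((degree_modByMonic_lt f hmonic).trans_eq Lagrange.degree_nodal) hrf
  calc L f = L r + L (Lagrange.nodal S id * (f /ₘ Lagrange.nodal S id)) := by
        rw [← map_add, modByMonic_add_div f (Lagrange.nodal S id)]
    _ = L (Lagrange.interpolate S id (f.eval ·)) := by rw [mem_momentIdeal.1 h, add_zero, hr]
    _ = (∑ x ∈ S, L (Lagrange.basis S id x) • leval x) f := by
        rw [Lagrange.interpolate_apply, map_sum, LinearMap.sum_apply]
        refine Finset.sum_congr rfl fun x _ => ?_
        rw [← smul_eq_C_mul, map_smul, LinearMap.smul_apply, leval_apply, smul_eq_mul, smul_eq_mul,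
          mul_comm]

lemma isPosDefBelow_sum_leval_iff {K : Type*} [Field K] [LinearOrder K] [IsStrictOrderedRing K]
    {S : Finset K} {w : K → K} :
    IsPosDefBelow (∑ x ∈ S, w x • leval x) S.card ↔ ∀ x ∈ S, 0 < w x := by
  have hsq (f : K[X]) :
      (∑ x ∈ S, w x • leval x) (f * f) = ∑ x ∈ S, w x * (f.eval x * f.eval x) := by
    simp [leval_apply]
  constructor
  · intro h x hx
    have hbasis := h (Lagrange.basis S id x)
      (Lagrange.basis_ne_zero Function.injective_id.injOn hx) ?_
    · rw [hsq, Finset.sum_eq_single_of_mem x hx] at hbasis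
      · have hself : (Lagrange.basis S id x).eval x = 1 :=
          Lagrange.eval_basis_self (v := id) Function.injective_id.injOn hx
        simpa [hself] using hbasis
      · intro y hy hyx
        have hne : (Lagrange.basis S id x).eval y = 0 :=
          Lagrange.eval_basis_of_ne (v := id) hyx.symm hy
        rw [hne, mul_zero, mul_zero]
    · rw [Lagrange.degree_basis Function.injective_id.injOn hx]
      exact_mod_cast Nat.sub_lt (Finset.card_pos.2 ⟨x, hx⟩) one_pos
  · intro hw f hf hdeg
    obtain ⟨x, hx, hfx⟩ : ∃ x ∈ S, f.eval x ≠ 0 := by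
      by_contra! hzero
      exact hf (eq_zero_of_degree_lt_of_eval_finset_eq_zero S hdeg hzero)
    rw [hsq]
    exact Finset.sum_pos' (fun y hy => mul_nonneg (hw y hy).le (mul_self_nonneg _))
      ⟨x, hx, mul_pos (hw x hx) (mul_self_pos.2 hfx)⟩

theorem exists_eq_sum_leval_iff {L : ℝ[X] →ₗ[ℝ] ℝ} {n : ℕ} :
    (∃ S : Finset ℝ, S.card = n ∧ ∃ w : ℝ → ℝ, (∀ x ∈ S, 0 < w x) ∧
        L = ∑ x ∈ S, w x • leval x) ↔
      IsPosDefBelow L n ∧ ∃ p ∈ momentIdeal L, p.degree = n := by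
  constructor
  · rintro ⟨S, rfl, w, hw, rfl⟩
    exact ⟨isPosDefBelow_sum_leval_iff.2 hw, _, nodal_mem_momentIdeal_sum_leval S w,
      Lagrange.degree_nodal⟩
  · rintro ⟨hL, p, hp, hdeg⟩
    obtain ⟨S, rfl, hS⟩ := exists_nodal_mem_momentIdeal hL hp hdeg
    have hsum := eq_sum_leval_of_nodal_mem_momentIdeal hS
    refine ⟨S, rfl, _, ?_, hsum⟩
    rw [hsum] at hL
    exact isPosDefBelow_sum_leval_iff.1 hL

end Quadrature

section FinitelySupportedMeasures

variable {α : Type*} [MeasurableSpace α] [MeasurableSingletonClass α]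

lemma integral_eq_sum_of_measure_compl_finset_eq_zero {E : Type*} [NormedAddCommGroup E]
    [NormedSpace ℝ E] [CompleteSpace E] {μ : Measure α} [IsFiniteMeasure μ] {S : Finset α}
    (hS : μ (S : Set α)ᶜ = 0) (f : α → E) : ∫ x, f x ∂μ = ∑ x ∈ S, μ.real {x} • f x := by
  have hrestrict : μ.restrict (S : Set α) = μ := Measure.restrict_eq_self_of_ae_mem hS
  rw [← setIntegral_finset S .finset, hrestrict]

lemma exists_isFiniteMeasure_real_singleton_eq (S : Finset α) {w : α → ℝ}
    (hw : ∀ x ∈ S, 0 ≤ w x) :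
    ∃ μ : Measure α, IsFiniteMeasure μ ∧ μ (S : Set α)ᶜ = 0 ∧ ∀ x ∈ S, μ.real {x} = w x := by
  classical
  refine ⟨∑ x ∈ S, ENNReal.ofReal (w x) • Measure.dirac x, ⟨?_⟩, ?_, fun x hx => ?_⟩
  · simp [Measure.finsetSum_apply]
  · rw [Measure.finsetSum_apply]
    exact Finset.sum_eq_zero fun x hx => by simp [hx]
  · rw [measureReal_def, Measure.finsetSum_apply, Finset.sum_eq_single_of_mem x hx]
    · simp [hw x hx]
    · intro y _ hyx
      simp [hyx]

theorem exists_measure_iff_exists_eq_sum_leval {s : ℕ → ℝ} {n : ℕ} :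
    (∃ σ : Measure ℝ, IsFiniteMeasure σ ∧
        (∃ S : Finset ℝ, S.card = n ∧ σ (↑S : Set ℝ)ᶜ = 0 ∧ ∀ x ∈ S, 0 < σ {x}) ∧
        (∀ i : ℕ, ∫ u, u ^ i ∂σ = s i)) ↔
      ∃ S : Finset ℝ, S.card = n ∧ ∃ w : ℝ → ℝ, (∀ x ∈ S, 0 < w x) ∧
        momentFunctional s = ∑ x ∈ S, w x • leval x := by
  constructor
  · rintro ⟨σ, hfin, ⟨S, hcard, hnull, hpos⟩, hmom⟩
    refine ⟨S, hcard, fun x => σ.real {x}, fun x hx => ?_, momentFunctional_eq_iff.2 fun i => ?_⟩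
    · exact ENNReal.toReal_pos (hpos x hx).ne' (measure_ne_top σ _)
    · rw [← hmom, integral_eq_sum_of_measure_compl_finset_eq_zero hnull]
      simp
  · rintro ⟨S, hcard, w, hw, hs⟩
    obtain ⟨σ, hfin, hnull, hσ⟩ :=
      exists_isFiniteMeasure_real_singleton_eq S fun x hx => (hw x hx).le
    refine ⟨σ, hfin, ⟨S, hcard, hnull, fun x hx => ?_⟩, fun i => ?_⟩
    · refine (ENNReal.toReal_pos_iff.1 ?_).1
      rw [← measureReal_def, hσ x hx]
      exact hw x hx
    · rw [integral_eq_sum_of_measure_compl_finset_eq_zero hnull, momentFunctional_eq_iff.1 hs]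
      simpa using Finset.sum_congr rfl fun x hx => by rw [hσ x hx]

end FinitelySupportedMeasures

/-- A real sequence `s` is the moment sequence of a (finite, nonnegative Borel) measure on
`ℝ` supported on exactly `k + 1` distinct points if and only if the Hankel determinants
satisfy `D_0, …, D_k > 0` and `D_{k+1} = D_{k+2} = ⋯ = 0`. -/
theorem moment_measure_finitely_many_points_iff (s : ℕ → ℝ) (k : ℕ) :
    (∃ σ : Measure ℝ, IsFiniteMeasure σ ∧
        (∃ S : Finset ℝ, S.card = k + 1 ∧ σ (↑S : Set ℝ)ᶜ = 0 ∧ ∀ x ∈ S, 0 < σ {x}) ∧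
        (∀ n : ℕ, ∫ u, u ^ n ∂σ = s n)) ↔
      ((∀ m ≤ k, 0 < hankelDet s m) ∧ ∀ m > k, hankelDet s m = 0) := by
  have hpos : IsPosDefBelow (momentFunctional s) (k + 1) ↔ ∀ m ≤ k, 0 < hankelDet s m := by
    rw [isPosDefBelow_momentFunctional_iff_forall_det_pos]
    refine ⟨fun h m hm => h (m + 1) (Nat.succ_le_succ hm), fun h m hm => ?_⟩
    cases m with
    | zero => simp
    | succ m => exact h m (Nat.le_of_succ_le_succ hm)
  have hzero : (∀ m > k + 1, (hankelMatrix s m).det = 0) ↔ ∀ m > k, hankelDet s m = 0 := by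
    refine ⟨fun h m hm => h (m + 1) (Nat.succ_lt_succ hm), fun h m hm => ?_⟩
    obtain ⟨m, rfl⟩ := Nat.exists_eq_succ_of_ne_zero (Nat.ne_zero_of_lt hm)
    exact h m (Nat.lt_of_succ_lt_succ hm)
  rw [exists_measure_iff_exists_eq_sum_leval, exists_eq_sum_leval_iff, hpos, ← hzero]
  exact and_congr_right fun h =>
    exists_mem_momentIdeal_iff_forall_det_hankelMatrix (h k le_rfl).ne'
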